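/- Let r > π²/2. Then there exists a differentiable function x : ℝ → ℝ with x(t) > 0 for all t, x not constant, satisfying x'(t) = r·x(t)·(1 − ∫_{s∈(0,1)} x(t−s) ds) for all t ∈ ℝ, which is periodic of period 2 (x(t+2) = x(t) for all t), and which moreover satisfies: there is a constant c such that x(t)·x(t−1) = c for all t, and ∫_{s∈(0,2)} x(t−s) ds = 2 for all t. -/

import Mathlib

open Real

/-!
Put `u = log x`. If `x` has period `2`, `x t * x (t - 1) = c` and `x` has mean `1`, the delay
equation becomes the conservative oscillator `v'' = -k sinh v` for `v = u - (log c) / 2`, with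
`k = 2 r √c`. Its orbits are uniformised by an angle `φ` through `sinh (v / 2) = m sin φ`, which
turns the second-order equation into the scalar autonomous equation
`φ' = L D(φ)`, `D(ψ) = √(1 + m² sin² ψ)`. Taking `L = ∫₀^π 1 / D` makes `φ (t + 1) = φ t + π`, and
`x = L² / (2 r) * (m sin φ + D(φ))²` then satisfies `x' / x = 2 L m cos φ` and has the explicit
antiderivative `L / (2 r) * B(φ) - L m / r * cos φ`, where `B' = (1 + 2 m² sin²) / D`.
Hence the equation and the mean condition both reduce to the single scalar equation
`L M = 2 r`, where `M = ∫₀^π (1 + 2 m² sin²) / D`.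

The product `L M` is continuous in `m`, equals `π²` at `m = 0`, and is at least
`2 log (1 + m π)`, so the intermediate value theorem provides `m > 0` for each `r > π² / 2`
(`exists_modulus`). The angle `φ` is obtained in `exists_phase` by inverting `∫₀^y 1 / D`.
-/

namespace DelayLogistic

/-- The function `D(ψ) = √(1 + m² sin² ψ)`, the speed of the angle variable up to scaling. -/
noncomputable def speed (m ψ : ℝ) : ℝ := √(1 + m ^ 2 * sin ψ ^ 2)

/-- `∫₀^y 1 / D`, the rescaled time at which the angle `y` is reached. -/
noncomputable def timeOf (m y : ℝ) : ℝ := ∫ ψ in (0:ℝ)..y, 1 / speed m ψ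

/-- `∫₀^y (1 + 2 m² sin²) / D`, which carries the mean growth of the antiderivative of
the solution, as a function of the angle. -/
noncomputable def massOf (m y : ℝ) : ℝ :=
  ∫ ψ in (0:ℝ)..y, (1 + 2 * m ^ 2 * sin ψ ^ 2) / speed m ψ

lemma speed_pos (m ψ : ℝ) : 0 < speed m ψ := Real.sqrt_pos.2 (by positivity)

lemma speed_sq (m ψ : ℝ) : speed m ψ ^ 2 = 1 + m ^ 2 * sin ψ ^ 2 :=
  Real.sq_sqrt (by positivity)

lemma speed_add_pi (m ψ : ℝ) : speed m (ψ + π) = speed m ψ := by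
  simp [speed, sin_add_pi]

lemma continuous_speed_uncurry : Continuous (fun p : ℝ × ℝ => speed p.1 p.2) := by
  unfold speed; fun_prop

lemma continuous_speed (m : ℝ) : Continuous (speed m) := by
  unfold speed; fun_prop

lemma continuous_inv_speed (m : ℝ) : Continuous (fun ψ => 1 / speed m ψ) :=
  continuous_const.div (continuous_speed m) fun ψ => (speed_pos m ψ).ne'

lemma continuous_mass_density (m : ℝ) :
    Continuous (fun ψ => (1 + 2 * m ^ 2 * sin ψ ^ 2) / speed m ψ) :=
  Continuous.div (by fun_prop) (continuous_speed m) fun ψ => (speed_pos m ψ).ne'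

lemma hasDerivAt_speed (m ψ : ℝ) :
    HasDerivAt (speed m) (m ^ 2 * sin ψ * cos ψ / speed m ψ) ψ := by
  have h : HasDerivAt (fun ψ => 1 + m ^ 2 * sin ψ ^ 2) (m ^ 2 * (2 * sin ψ * cos ψ)) ψ := by
    simpa using (((hasDerivAt_sin ψ).pow 2).const_mul (m ^ 2)).const_add 1
  have h2 := h.sqrt (by positivity)
  refine h2.congr_deriv ?_
  have := (speed_pos m ψ).ne'
  change _ / (2 * speed m ψ) = _
  field_simp

lemma hasDerivAt_timeOf (m y : ℝ) : HasDerivAt (timeOf m) (1 / speed m y) y :=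
  intervalIntegral.integral_hasDerivAt_right ((continuous_inv_speed m).intervalIntegrable _ _)
    ((continuous_inv_speed m).stronglyMeasurableAtFilter _ _) (continuous_inv_speed m).continuousAt

lemma hasDerivAt_massOf (m y : ℝ) :
    HasDerivAt (massOf m) ((1 + 2 * m ^ 2 * sin y ^ 2) / speed m y) y :=
  intervalIntegral.integral_hasDerivAt_right ((continuous_mass_density m).intervalIntegrable _ _)
    ((continuous_mass_density m).stronglyMeasurableAtFilter _ _)
    (continuous_mass_density m).continuousAt

lemma integral_add_pi {g : ℝ → ℝ} (hg : Continuous g) (hp : Function.Periodic g π) (y : ℝ) :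
    ∫ ψ in (0:ℝ)..(y + π), g ψ = (∫ ψ in (0:ℝ)..y, g ψ) + ∫ ψ in (0:ℝ)..π, g ψ := by
  have h := hp.intervalIntegral_add_eq y 0
  rw [zero_add] at h
  rw [← h, intervalIntegral.integral_add_adjacent_intervals
    (hg.intervalIntegrable _ _) (hg.intervalIntegrable _ _)]

lemma timeOf_add_pi (m y : ℝ) : timeOf m (y + π) = timeOf m y + timeOf m π :=
  integral_add_pi (continuous_inv_speed m) (fun ψ => by simp [speed_add_pi]) y

lemma massOf_add_pi (m y : ℝ) : massOf m (y + π) = massOf m y + massOf m π :=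
  integral_add_pi (continuous_mass_density m) (fun ψ => by simp [speed_add_pi, sin_add_pi]) y

lemma timeOf_strictMono (m : ℝ) : StrictMono (timeOf m) :=
  strictMono_of_hasDerivAt_pos (hasDerivAt_timeOf m) fun y => one_div_pos.2 (speed_pos m y)

lemma timeOf_pi_pos (m : ℝ) : 0 < timeOf m π := by
  have h := timeOf_strictMono m pi_pos
  simpa [timeOf] using h

lemma timeOf_surjective (m : ℝ) : Function.Surjective (timeOf m) := by
  have hL := timeOf_pi_pos m
  have hc : Continuous (timeOf m) :=
    continuous_iff_continuousAt.2 fun y => (hasDerivAt_timeOf m y).continuousAt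
  have h0 : timeOf m 0 = 0 := by simp [timeOf]
  -- quasi-periodicity makes `timeOf` unbounded in both directions
  have hn : ∀ n : ℕ, timeOf m (n * π) = n * timeOf m π := by
    intro n
    induction n with
    | zero => simp [h0]
    | succ k ih => push_cast; rw [add_mul, one_mul, timeOf_add_pi, ih]; ring
  have hneg : ∀ n : ℕ, timeOf m (-(n * π)) = -(n * timeOf m π) := by
    intro n
    induction n with
    | zero => simp [h0]
    | succ k ih =>
      have h := timeOf_add_pi m (-((k + 1 : ℕ) * π))
      have e : -(((k + 1 : ℕ) : ℝ) * π) + π = -(k * π) := by push_cast; ring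
      rw [e, ih] at h
      push_cast at h ⊢
      linarith
  intro b
  obtain ⟨n, hb⟩ := exists_nat_ge (|b| / timeOf m π)
  rw [div_le_iff₀ hL] at hb
  have := abs_le.1 hb
  have hmem : b ∈ Set.Icc (timeOf m (-(n * π))) (timeOf m (n * π)) := by
    rw [hn, hneg]; exact this
  obtain ⟨y, -, hy⟩ := intermediate_value_Icc
    (by have : 0 ≤ (n : ℝ) * π := by positivity
        linarith) hc.continuousOn hmem
  exact ⟨y, hy⟩

/-- The angle variable: the inverse of `timeOf m`, with time rescaled so that a half-turn takes
time `1`. -/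
lemma exists_phase (m : ℝ) : ∃ φ : ℝ → ℝ,
    (∀ t, HasDerivAt φ (timeOf m π * speed m (φ t)) t) ∧
    (∀ t, φ (t + 1) = φ t + π) ∧ ∃ t, φ t = 0 := by
  let e := (timeOf_strictMono m).orderIsoOfSurjective _ (timeOf_surjective m)
  have he : ∀ s, timeOf m (e.symm s) = s := fun s => e.apply_symm_apply s
  have hL := timeOf_pi_pos m
  refine ⟨fun t => e.symm (timeOf m π * t), fun t => ?_, fun t => ?_, 0, ?_⟩
  · have h1 : HasDerivAt e.symm (1 / speed m (e.symm (timeOf m π * t)))⁻¹ (timeOf m π * t) :=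
      HasDerivAt.of_local_left_inverse e.symm.continuous.continuousAt (hasDerivAt_timeOf m _)
        (one_div_pos.2 (speed_pos m _)).ne' (Filter.Eventually.of_forall he)
    have h2 : HasDerivAt (fun t => timeOf m π * t) (timeOf m π) t := by
      simpa using (hasDerivAt_id t).const_mul (timeOf m π)
    have h3 := h1.comp t h2
    refine h3.congr_deriv ?_
    simp [mul_comm]
  · apply (timeOf_strictMono m).injective
    simp only [timeOf_add_pi, he]
    ring
  · apply (timeOf_strictMono m).injective
    simp only [he]
    simp [timeOf]

/-- From `D(ψ) ≤ 1 + m ψ` on `[0, π]`. -/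
lemma log_le_timeOf {m : ℝ} (hm : 0 < m) : log (1 + m * π) / m ≤ timeOf m π := by
  have hd : ∀ ψ ∈ Set.uIcc 0 π, HasDerivAt (fun ψ => log (1 + m * ψ) / m) (1 / (1 + m * ψ)) ψ := by
    intro ψ hψ
    rw [Set.uIcc_of_le pi_pos.le] at hψ
    have hp : 0 < 1 + m * ψ := by have := mul_nonneg hm.le hψ.1; linarith
    have h1 : HasDerivAt (fun ψ => 1 + m * ψ) m ψ := by
      simpa using ((hasDerivAt_id ψ).const_mul m).const_add 1
    refine ((h1.log hp.ne').div_const m).congr_deriv ?_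
    field_simp
  have hc : IntervalIntegrable (fun ψ => 1 / (1 + m * ψ)) MeasureTheory.volume 0 π := by
    apply ContinuousOn.intervalIntegrable
    intro ψ hψ
    rw [Set.uIcc_of_le pi_pos.le] at hψ
    have hp : 0 < 1 + m * ψ := by have := mul_nonneg hm.le hψ.1; linarith
    have hcd : ContinuousAt (fun ψ => 1 + m * ψ) ψ := by fun_prop
    exact (continuousAt_const.div hcd hp.ne').continuousWithinAt
  have h := intervalIntegral.integral_eq_sub_of_hasDerivAt hd hc
  simp only [mul_zero, add_zero, log_one, zero_div, sub_zero] at h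
  rw [← h]
  refine intervalIntegral.integral_mono_on pi_pos.le hc
    ((continuous_inv_speed m).intervalIntegrable _ _) fun ψ hψ => ?_
  have hmψ := mul_nonneg hm.le hψ.1
  apply one_div_le_one_div_of_le (speed_pos m ψ)
  apply Real.sqrt_le_iff.2 ⟨by linarith, ?_⟩
  have h1 : sin ψ ≤ ψ := sin_le hψ.1
  have h2 : 0 ≤ sin ψ := sin_nonneg_of_mem_Icc hψ
  have h3 : sin ψ ^ 2 ≤ ψ ^ 2 := by gcongr
  nlinarith [mul_le_mul_of_nonneg_left h3 (sq_nonneg m)]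

/-- From `(1 + 2 m² sin²) / D ≥ D ≥ m sin` on `[0, π]`. -/
lemma two_mul_le_massOf (m : ℝ) : 2 * m ≤ massOf m π := by
  have h : ∫ ψ in (0:ℝ)..π, m * sin ψ = 2 * m := by
    rw [intervalIntegral.integral_const_mul, integral_sin]; simp; ring
  rw [← h]
  refine intervalIntegral.integral_mono_on pi_pos.le
    (Continuous.intervalIntegrable (by fun_prop) _ _)
    ((continuous_mass_density m).intervalIntegrable _ _) fun ψ hψ => ?_
  have hs := speed_pos m ψ
  have hq := speed_sq m ψ
  rw [le_div_iff₀ hs]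
  have h1 : m * sin ψ ≤ speed m ψ := Real.le_sqrt_of_sq_le (by nlinarith)
  nlinarith [mul_le_mul_of_nonneg_right h1 hs.le, sq_nonneg (m * sin ψ)]

lemma exists_modulus {r : ℝ} (hr : π ^ 2 / 2 < r) :
    ∃ m : ℝ, 0 < m ∧ timeOf m π * massOf m π = 2 * r := by
  have hc : Continuous (fun m => timeOf m π * massOf m π) := by
    apply Continuous.mul
    · apply intervalIntegral.continuous_parametric_intervalIntegral_of_continuous'
      exact continuous_const.div continuous_speed_uncurry fun p => (speed_pos _ _).ne'
    · apply intervalIntegral.continuous_parametric_intervalIntegral_of_continuous'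
      exact Continuous.div (by fun_prop) continuous_speed_uncurry fun p => (speed_pos _ _).ne'
  have h0 : timeOf 0 π * massOf 0 π = π ^ 2 := by
    simp [timeOf, massOf, speed]; ring
  -- chosen so that `log (1 + m₁ π) ≥ log (exp r) = r`
  set m₁ := exp r / π with hm₁
  have hm₁pos : 0 < m₁ := by positivity
  have h1 : 2 * r ≤ timeOf m₁ π * massOf m₁ π := by
    have hlog : r ≤ log (1 + m₁ * π) := by
      rw [le_log_iff_exp_le (by positivity), hm₁, div_mul_cancel₀ _ pi_pos.ne']
      linarith
    calc 2 * r ≤ 2 * log (1 + m₁ * π) := by linarith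
      _ = log (1 + m₁ * π) / m₁ * (2 * m₁) := by field_simp
      _ ≤ _ := mul_le_mul (log_le_timeOf hm₁pos) (two_mul_le_massOf m₁)
        (by positivity) (timeOf_pi_pos _).le
  obtain ⟨m, hm, hmr⟩ := intermediate_value_Icc hm₁pos.le hc.continuousOn
    (show 2 * r ∈ Set.Icc _ _ from ⟨by simp only [h0]; linarith, h1⟩)
  refine ⟨m, lt_of_le_of_ne hm.1 ?_, hmr⟩
  rintro rfl
  simp only [h0] at hmr
  linarith

end DelayLogistic

open DelayLogistic

/-- For `r > π²/2`, the delay differential equation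
`x'(t) = r x(t) (1 − ∫₀¹ x(t−s) ds)` has a positive, nonconstant periodic
solution of period 2, satisfying `x(t) x(t−1) = const` and
`∫₀² x(t−s) ds = 2` for all `t`. -/
theorem dde_periodic_solution_of_period_two (r : ℝ) (hr : r > π ^ 2 / 2) :
    ∃ x : ℝ → ℝ, Differentiable ℝ x ∧ (∀ t, x t > 0) ∧
      (¬ ∃ c : ℝ, ∀ t, x t = c) ∧
      (∀ t : ℝ, deriv x t = r * x t * (1 - ∫ s in (0:ℝ)..1, x (t - s))) ∧
      (∀ t : ℝ, x (t + 2) = x t) ∧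
      (∃ c : ℝ, ∀ t : ℝ, x t * x (t - 1) = c) ∧
      (∀ t : ℝ, (∫ s in (0:ℝ)..2, x (t - s)) = 2) := by
  have hr0 : 0 < r := lt_trans (by positivity) hr
  obtain ⟨m, hm, hLM⟩ := exists_modulus hr
  obtain ⟨φ, hφ, hφ1, t₀, ht₀⟩ := exists_phase m
  have hL := timeOf_pi_pos m
  set L := timeOf m π with hLdef
  set M := massOf m π with hMdef
  have hφm1 : ∀ t, φ (t - 1) = φ t - π := fun t => by
    have := hφ1 (t - 1); rw [sub_add_cancel] at this; linarith
  have hspeed_sub : ∀ ψ, speed m (ψ - π) = speed m ψ := fun ψ => by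
    have := speed_add_pi m (ψ - π); rw [sub_add_cancel] at this; exact this.symm
  have hmass_sub : ∀ ψ, massOf m (ψ - π) = massOf m ψ - M := fun ψ => by
    have := massOf_add_pi m (ψ - π); rw [sub_add_cancel] at this; linarith
  let x : ℝ → ℝ := fun t => L ^ 2 / (2 * r) * (m * sin (φ t) + speed m (φ t)) ^ 2
  let X : ℝ → ℝ := fun t => L / (2 * r) * massOf m (φ t) - L * m / r * cos (φ t)
  have hpos : ∀ t, 0 < x t := by
    intro t
    have hs := speed_pos m (φ t)
    have hq := speed_sq m (φ t)
    have : m * sin (φ t) + speed m (φ t) ≠ 0 := by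
      intro h
      have : speed m (φ t) = -(m * sin (φ t)) := by linarith
      rw [this] at hq
      linarith
    have := pow_pos (abs_pos.2 this) 2
    rw [sq_abs] at this
    positivity
  have hx : ∀ t, HasDerivAt x (x t * (2 * L * m * cos (φ t))) t := by
    intro t
    have hs := (speed_pos m (φ t)).ne'
    have h1 := (((((hasDerivAt_sin (φ t)).const_mul m).add
      (hasDerivAt_speed m (φ t))).comp t (hφ t)).pow 2).const_mul (L ^ 2 / (2 * r))
    refine h1.congr_deriv ?_
    simp only [x, Function.comp, Pi.add_apply]
    field_simp
    ring
  have hX : ∀ t, HasDerivAt X (x t) t := by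
    intro t
    have hs := (speed_pos m (φ t)).ne'
    have hq := speed_sq m (φ t)
    have h1 := (((hasDerivAt_massOf m (φ t)).comp t (hφ t)).const_mul (L / (2 * r))).sub
      (((hasDerivAt_cos (φ t)).comp t (hφ t)).const_mul (L * m / r))
    refine h1.congr_deriv ?_
    simp only [x]
    field_simp
    linear_combination -hq
  have hxd : Differentiable ℝ x := fun t => (hx t).differentiableAt
  have hint : ∀ t a, ∫ s in (0:ℝ)..a, x (t - s) = X t - X (t - a) := by
    intro t a
    rw [intervalIntegral.integral_comp_sub_left, sub_zero]
    exact intervalIntegral.integral_eq_sub_of_hasDerivAt (fun s _ => hX s)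
      (hxd.continuous.intervalIntegrable _ _)
  have hX1 : ∀ t, X (t - 1) = X t - 1 + 2 * L * m / r * cos (φ t) := by
    intro t
    simp only [X, hφm1, hmass_sub, cos_sub_pi]
    field_simp
    linear_combination -hLM
  have hcos1 : ∀ t, cos (φ (t - 1)) = -cos (φ t) := fun t => by rw [hφm1, cos_sub_pi]
  refine ⟨x, hxd, hpos, ?_, ?_, ?_, ⟨(L ^ 2 / (2 * r)) ^ 2, ?_⟩, ?_⟩
  · rintro ⟨c, hc⟩
    have h1 := (hx t₀).deriv
    rw [show x = fun _ => c from funext hc, deriv_const, ht₀, cos_zero, ← hc t₀] at h1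
    have := hpos t₀
    have : 0 < x t₀ * (2 * L * m * 1) := by positivity
    linarith
  · intro t
    rw [(hx t).deriv, hint, hX1]
    field_simp
    ring
  · intro t
    have h2 : φ (t + 2) = φ t + π + π := by
      rw [← hφ1, ← hφ1]; ring_nf
    simp only [x, h2, speed_add_pi, sin_add_pi, neg_neg]
  · intro t
    have hq := speed_sq m (φ t)
    simp only [x, hφm1, hspeed_sub, sin_sub_pi]
    have h : (m * sin (φ t) + speed m (φ t)) * (m * -sin (φ t) + speed m (φ t)) = 1 := by
      linear_combination hq
    calc _ = (L ^ 2 / (2 * r)) ^ 2 *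
        ((m * sin (φ t) + speed m (φ t)) * (m * -sin (φ t) + speed m (φ t))) ^ 2 := by ring
      _ = _ := by rw [h]; ring
  · intro t
    rw [hint, show t - 2 = t - 1 - 1 by ring, hX1, hX1, hcos1]
    ring
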